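/- Consider Gaussian BAI and define F(p,μ) = Σ_{x∈X} μ_x D(p,x), with LMO_p and LMO_μ as follows: for (p,μ) ∈ Δ_K × Δ_X let C(p,μ) = conv{ f : there exist p_n ∈ int Δ_K with p_n → p and ∇_p F(p_n,μ) → f }, LMO_p(p,μ) = conv{ q ∈ Δ_K : ∃ f ∈ C(p,μ), qᵀf = max_{q'∈Δ_K} q'ᵀf }, and LMO_μ(p,μ) = { ν ∈ Δ_X : Σ_x ν_x D(p,x) = min_{x'∈X} D(p,x') }. Let (p_n,μ_n)_{n≥0} be any sequence with (p₀,μ₀) ∈ Δ_K × Δ_X and, for every n ≥ 0, p_{n+1} = p_n + (q_n − p_n)/(n+1) with q_n ∈ LMO_p(p_n,μ_n) and μ_{n+1} = μ_n + (ν_n − μ_n)/(n+1) with ν_n ∈ LMO_μ(p_n,μ_n). Then the game value converges: lim_{n→∞} F(p_n,μ_n) = F*, where F* = max_{p∈Δ_K} min_{x∈X} D(p,x). -/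

import Mathlib

open Filter

noncomputable section

/-- The relative interior of the standard simplex. -/
def simplexInterior (K : ℕ) : Set (Fin K → ℝ) :=
  {p | p ∈ stdSimplex ℝ (Fin K) ∧ ∀ i, 0 < p i}

/-- Gaussian best-arm-identification payoff. -/
def Dg {K : ℕ} (θ : Fin K → ℝ) (σ : ℝ) (Istar : Fin K)
    (p : Fin K → ℝ) (x : Fin K) : ℝ :=
  if 0 < p Istar + p x then
    ((θ Istar - θ x) ^ 2 / (2 * σ ^ 2)) * (p Istar * p x / (p Istar + p x))
  else 0

/-- The mixed payoff `F(p,μ) = ∑_{x∈X} μ_x D(p,x)` over scenarios `X = [K] \ {I*}`. -/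
def Fg {K : ℕ} (θ : Fin K → ℝ) (σ : ℝ) (Istar : Fin K)
    (p : Fin K → ℝ) (μ : {x : Fin K // x ≠ Istar} → ℝ) : ℝ :=
  ∑ x : {x : Fin K // x ≠ Istar}, μ x * Dg θ σ Istar p x.1

/-- Gradient of `F` in `p`, obtained from the Fréchet derivative. -/
def gradFg {K : ℕ} (θ : Fin K → ℝ) (σ : ℝ) (Istar : Fin K)
    (p : Fin K → ℝ) (μ : {x : Fin K // x ≠ Istar} → ℝ) : Fin K → ℝ :=
  fun i => fderiv ℝ (fun p' => Fg θ σ Istar p' μ) p (Pi.single i 1)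

/-- `C(p,μ)`: convex hull of limits of gradients `∇_p F(p_n, μ)` along interior
sequences `p_n → p`. -/
def Cg {K : ℕ} (θ : Fin K → ℝ) (σ : ℝ) (Istar : Fin K)
    (p : Fin K → ℝ) (μ : {x : Fin K // x ≠ Istar} → ℝ) : Set (Fin K → ℝ) :=
  convexHull ℝ {f : Fin K → ℝ | ∃ pn : ℕ → (Fin K → ℝ),
    (∀ n, pn n ∈ simplexInterior K) ∧
    Tendsto pn atTop (nhds p) ∧
    Tendsto (fun n => gradFg θ σ Istar (pn n) μ) atTop (nhds f)}

/-- `LMO_p(p,μ) = conv{ q ∈ Δ_K : ∃ f ∈ C(p,μ), qᵀf = max_{q'∈Δ_K} q'ᵀf }`. -/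
def LMOpg {K : ℕ} (θ : Fin K → ℝ) (σ : ℝ) (Istar : Fin K)
    (p : Fin K → ℝ) (μ : {x : Fin K // x ≠ Istar} → ℝ) : Set (Fin K → ℝ) :=
  convexHull ℝ {q : Fin K → ℝ | q ∈ stdSimplex ℝ (Fin K) ∧
    ∃ f ∈ Cg θ σ Istar p μ, ∀ q' ∈ stdSimplex ℝ (Fin K),
      ∑ i, q' i * f i ≤ ∑ i, q i * f i}

/-- `LMO_μ(p,μ) = { ν ∈ Δ_X : ∑_x ν_x D(p,x) = min_{x'∈X} D(p,x') }`. -/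
def LMOmug {K : ℕ} (θ : Fin K → ℝ) (σ : ℝ) (Istar : Fin K)
    (p : Fin K → ℝ) : Set ({x : Fin K // x ≠ Istar} → ℝ) :=
  {ν : {x : Fin K // x ≠ Istar} → ℝ | ν ∈ stdSimplex ℝ {x : Fin K // x ≠ Istar} ∧
    ∑ x : {x : Fin K // x ≠ Istar}, ν x * Dg θ σ Istar p x.1 =
      ⨅ x' : {x : Fin K // x ≠ Istar}, Dg θ σ Istar p x'.1}

/-!
Taking `k` as the unit of time, the averages `p_n`, `μ_n` converge along any ultrafilter on `k` to
curves `b(t)`, `β(t)`, and the cumulative plays `a(t) = t b(t)`, `m(t) = t β(t)` are Lipschitz and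
move only in the direction of best responses. The duality gap
`max_i ∂_i F(a, m) - min_x D(a, x)` is a Lyapunov function: by Danskin's theorem its derivative is
`⟨a', (∇F)'⟩ - ⟨m', D'⟩`, which is nonpositive since `F` is concave in `p` and linear in `μ`. As
`D` is homogeneous of degree one, the gap of `(a(t), m(t))` is `O(t)`, hence it vanishes as `t → 0`
and is nonpositive at every later time, so that `(b(1), β(1))` is an equilibrium.

The payoff is smooth only where no `p_I + p_x` vanishes. The iterates stay away from the
singularity because an arm `x` with `p_x > p_I` has a smaller gradient component than some other
arm: it is not played, and therefore `p_I` stays bounded below.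
-/

open Set MeasureTheory
open scoped Topology Matrix

theorem locallyLipschitzOn_comp {α β γ : Type*} [PseudoEMetricSpace α] [PseudoEMetricSpace β]
    [PseudoEMetricSpace γ] {g : β → γ} {f : α → β} {s : Set α} {t : Set β}
    (hg : LocallyLipschitzOn t g) (hf : LocallyLipschitzOn s f) (hst : MapsTo f s t) :
    LocallyLipschitzOn s (g ∘ f) := by
  intro x hx
  obtain ⟨Kg, u, hu, hgu⟩ := hg (hst hx)
  obtain ⟨Kf, v, hv, hfv⟩ := hf hx
  have hcont : Tendsto f (𝓝[s] x) (𝓝[t] f x) :=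
    (hf.continuousOn x hx).tendsto_nhdsWithin hst
  exact ⟨Kg * Kf, v ∩ f ⁻¹' u, inter_mem hv (hcont hu),
    hgu.comp (hfv.mono inter_subset_left) fun _ hy => hy.2⟩

theorem locallyLipschitzOn_prodMk {α β γ : Type*} [PseudoEMetricSpace α] [PseudoEMetricSpace β]
    [PseudoEMetricSpace γ] {f : α → β} {g : α → γ} {s : Set α}
    (hf : LocallyLipschitzOn s f) (hg : LocallyLipschitzOn s g) :
    LocallyLipschitzOn s fun x => (f x, g x) := by
  intro x hx
  obtain ⟨Kf, u, hu, hfu⟩ := hf hx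
  obtain ⟨Kg, v, hv, hgv⟩ := hg hx
  exact ⟨max Kf Kg, u ∩ v, inter_mem hu hv,
    (hfu.mono inter_subset_left).prodMk (hgv.mono inter_subset_right)⟩

theorem lipschitzWith_iSup_apply {ι : Type*} [Fintype ι] [Nonempty ι] :
    LipschitzWith 1 fun v : ι → ℝ => ⨆ i, v i := by
  refine LipschitzWith.of_le_add fun v w => ciSup_le fun i => ?_
  have hi : v i - w i ≤ dist v w := (le_abs_self _).trans (dist_le_pi_dist v w i)
  linarith [le_ciSup (finite_range w).bddAbove i]

theorem locallyLipschitzOn_iSup_apply {α ι : Type*} [PseudoEMetricSpace α] [Fintype ι] [Nonempty ι]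
    {f : α → ι → ℝ} {s : Set α} (hf : LocallyLipschitzOn s f) :
    LocallyLipschitzOn s fun x => ⨆ i, f x i :=
  locallyLipschitzOn_comp (g := fun v : ι → ℝ => ⨆ i, v i)
    lipschitzWith_iSup_apply.locallyLipschitz.locallyLipschitzOn hf (mapsTo_univ f s)

section LocallyLipschitzCurve

variable {s : Set ℝ}

theorem ae_differentiableAt_of_locallyLipschitzOn {V : Type*} [NormedAddCommGroup V]
    [NormedSpace ℝ V] [FiniteDimensional ℝ V] {f : ℝ → V} (hs : IsOpen s) (hconn : OrdConnected s)
    (hf : LocallyLipschitzOn s f) : ∀ᵐ t, t ∈ s → DifferentiableAt ℝ f t := by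
  have hbv : LocallyBoundedVariationOn f s := by
    intro a b ha hb
    rcases le_or_gt a b with hab | hab
    · obtain ⟨C, hC⟩ :=
        (hf.mono (hconn.out ha hb)).exists_lipschitzOnWith_of_compact isCompact_Icc
      have := hC.locallyBoundedVariationOn a b (left_mem_Icc.2 hab) (right_mem_Icc.2 hab)
      exact this.mono (subset_inter inter_subset_right inter_subset_right)
    · simp [BoundedVariationOn, Icc_eq_empty hab.not_ge]
  filter_upwards [hbv.ae_differentiableWithinAt_of_mem] with t ht hts
  exact (ht hts).differentiableAt (hs.mem_nhds hts)

theorem antitoneOn_of_ae_deriv_nonpos {f : ℝ → ℝ} (hconn : OrdConnected s)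
    (hf : LocallyLipschitzOn s f) (hderiv : ∀ᵐ t, t ∈ s → deriv f t ≤ 0) : AntitoneOn f s := by
  intro a ha b hb hab
  have hsub : uIcc a b ⊆ s := hconn.uIcc_subset ha hb
  obtain ⟨C, hC⟩ := (hf.mono hsub).exists_lipschitzOnWith_of_compact isCompact_uIcc
  have hint := hC.absolutelyContinuousOnInterval.integral_deriv_eq_sub
  have hnonpos : ∫ t in a..b, deriv f t ≤ 0 := by
    rw [intervalIntegral.integral_of_le hab]
    refine setIntegral_nonpos_of_ae_restrict ?_
    rw [EventuallyLE, ae_restrict_iff' measurableSet_Ioc]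
    filter_upwards [hderiv] with t ht hts
    exact ht (hsub (Ioc_subset_Icc_self.trans Icc_subset_uIcc hts))
  linarith

end LocallyLipschitzCurve

theorem tendsto_slope_dotProduct_slope {ι : Type*} [Fintype ι] {y z : ℝ → ι → ℝ}
    {y' z' : ι → ℝ} {t : ℝ} (hy : HasDerivAt y y' t) (hz : HasDerivAt z z' t) :
    Tendsto (fun s => slope y t s ⬝ᵥ slope z t s) (𝓝[≠] t) (𝓝 (y' ⬝ᵥ z')) :=
  tendsto_finsetSum _ fun i _ =>
    (tendsto_pi_nhds.1 (hasDerivAt_iff_tendsto_slope.1 hy) i).mul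
      (tendsto_pi_nhds.1 (hasDerivAt_iff_tendsto_slope.1 hz) i)

theorem dotProduct_deriv_le_of_dotProduct_sub_le {ι κ : Type*} [Fintype ι] [Fintype κ]
    {u h : ℝ → ι → ℝ} {v k : ℝ → κ → ℝ} {u' h' : ι → ℝ} {v' k' : κ → ℝ} {t : ℝ}
    (hu : HasDerivAt u u' t) (hh : HasDerivAt h h' t)
    (hv : HasDerivAt v v' t) (hk : HasDerivAt k k' t)
    (hle : ∀ᶠ s in 𝓝 t, (u s - u t) ⬝ᵥ (h s - h t) ≤ (v s - v t) ⬝ᵥ (k s - k t)) :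
    u' ⬝ᵥ h' ≤ v' ⬝ᵥ k' := by
  refine le_of_tendsto_of_tendsto (tendsto_slope_dotProduct_slope hu hh)
    (tendsto_slope_dotProduct_slope hv hk) ?_
  filter_upwards [hle.filter_mono nhdsWithin_le_nhds] with s hs
  simp only [slope_def_module, smul_dotProduct, dotProduct_smul, smul_eq_mul, ← mul_assoc]
  exact mul_le_mul_of_nonneg_left hs (mul_self_nonneg _)

section Greedy

variable {ι : Type*} {u h : ℝ → ι → ℝ} {t : ℝ}

/-- The curve `u` is greedy for the scores `h`: a coordinate of `u` moves between two positive
times only if it attains the maximal score at some time in between. -/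
def IsGreedy (u h : ℝ → ι → ℝ) : Prop :=
  ∀ i s t, 0 < s → s < t → u s i ≠ u t i → ∃ τ ∈ Icc s t, ∀ j, h τ j ≤ h τ i

theorem IsGreedy.eventually_eq [Finite ι] [Nonempty ι] (hu : IsGreedy u h) (ht : 0 < t)
    (hcont : ContinuousAt h t) {i : ι} (hi : h t i < ⨆ j, h t j) :
    ∀ᶠ s in 𝓝 t, u s i = u t i := by
  obtain ⟨j, hj⟩ := exists_eq_ciSup_of_finite (f := h t)
  have hbeaten : ∀ᶠ s in 𝓝 t, 0 < s ∧ h s i < h s j :=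
    (lt_mem_nhds ht).and <| ((continuousAt_pi.1 hcont i).eventually_lt
      (continuousAt_pi.1 hcont j) (hj ▸ hi))
  obtain ⟨ε, hε, hball⟩ := Metric.eventually_nhds_iff_ball.1 hbeaten
  have hconv : OrdConnected (Metric.ball t ε) := (convex_ball t ε).ordConnected
  have ht_mem : t ∈ Metric.ball t ε := Metric.mem_ball_self hε
  have hconst : ∀ a ∈ Metric.ball t ε, ∀ b ∈ Metric.ball t ε, a < b → u a i = u b i := by
    intro a ha b hb hab
    by_contra hne
    obtain ⟨τ, hτ, hbest⟩ := hu i a b (hball a ha).1 hab hne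
    exact (hball τ (hconv.out ha hb hτ)).2.not_ge (hbest j)
  filter_upwards [Metric.ball_mem_nhds t hε] with s hs
  rcases lt_trichotomy s t with hst | rfl | hst
  · exact hconst s hs t ht_mem hst
  · rfl
  · exact (hconst t ht_mem s hs hst).symm

theorem IsGreedy.of_eq_smul {k : ℝ → ι → ℝ} (hu : IsGreedy u h)
    (hk : ∀ t, 0 < t → k t = t • h t) : IsGreedy u k := by
  intro i s t hs hst hne
  obtain ⟨τ, hτ, hbest⟩ := hu i s t hs hst hne
  have hτ_pos : 0 < τ := hs.trans_le hτ.1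
  refine ⟨τ, hτ, fun j => ?_⟩
  rw [hk τ hτ_pos]
  exact mul_le_mul_of_nonneg_left (hbest j) hτ_pos.le

variable [Fintype ι] [Nonempty ι] {u' h' : ι → ℝ}

-- A score that attains the maximum touches it from below, so the two derivatives agree.
theorem IsGreedy.deriv_iSup_eq_dotProduct (hu : IsGreedy u h) (ht : 0 < t)
    (hsum : ∀ s, 0 < s → ∑ i, u s i = s) (hu' : HasDerivAt u u' t) (hh' : HasDerivAt h h' t)
    (hdiff : DifferentiableAt ℝ (fun s => ⨆ i, h s i) t) :
    deriv (fun s => ⨆ i, h s i) t = u' ⬝ᵥ h' := by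
  set H : ℝ → ℝ := fun s => ⨆ i, h s i
  have hle : ∀ s i, h s i ≤ H s := fun s i => le_ciSup (finite_range (h s)).bddAbove i
  have hterm : ∀ i, u' i * h' i = u' i * deriv H t := by
    intro i
    rcases (hle t i).lt_or_eq with hlt | heq
    · have hzero : u' i = 0 := (hasDerivAt_pi.1 hu' i).unique <|
        (hasDerivAt_const t (u t i)).congr_of_eventuallyEq
          (hu.eventually_eq ht hh'.continuousAt hlt)
      rw [hzero, zero_mul, zero_mul]
    · have hmin : IsLocalMin (fun s => H s - h s i) t := by
        refine Eventually.of_forall fun s => ?_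
        simpa only [heq, sub_self] using sub_nonneg.2 (hle s i)
      have := hmin.hasDerivAt_eq_zero (hdiff.hasDerivAt.sub (hasDerivAt_pi.1 hh' i))
      rw [sub_eq_zero.1 this]
  have hmass : ∑ i, u' i = 1 := by
    refine (HasDerivAt.fun_sum fun i _ => hasDerivAt_pi.1 hu' i).unique ?_
    refine (hasDerivAt_id t).congr_of_eventuallyEq ?_
    filter_upwards [lt_mem_nhds ht] with s hs using hsum s hs
  simp_rw [dotProduct, hterm, ← Finset.sum_mul, hmass, one_mul]

end Greedy

section Simplex

variable {ι : Type*} [Fintype ι] {w f : ι → ℝ}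

theorem nonempty_of_mem_stdSimplex (hw : w ∈ stdSimplex ℝ ι) : Nonempty ι := by
  by_contra hempty
  rw [not_nonempty_iff] at hempty
  simp [stdSimplex_of_isEmpty_index] at hw

theorem dotProduct_le_of_mem_stdSimplex {c : ℝ} (hw : w ∈ stdSimplex ℝ ι)
    (hf : ∀ i, f i ≤ c) : w ⬝ᵥ f ≤ c :=
  calc w ⬝ᵥ f ≤ ∑ i, w i * c :=
        Finset.sum_le_sum fun i _ => mul_le_mul_of_nonneg_left (hf i) (hw.1 i)
    _ = c := by rw [← Finset.sum_mul, hw.2, one_mul]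

theorem le_dotProduct_of_mem_stdSimplex {c : ℝ} (hw : w ∈ stdSimplex ℝ ι)
    (hf : ∀ i, c ≤ f i) : c ≤ w ⬝ᵥ f := by
  simpa using dotProduct_le_of_mem_stdSimplex (f := -f) (c := -c) hw fun i => neg_le_neg (hf i)

theorem apply_eq_of_forall_le_dotProduct (hw : w ∈ stdSimplex ℝ ι) (hf : ∀ i, f i ≤ w ⬝ᵥ f)
    {i : ι} (hi : w i ≠ 0) : f i = w ⬝ᵥ f := by
  have hzero : ∑ j, w j * (w ⬝ᵥ f - f j) = 0 := by
    simp only [mul_sub, Finset.sum_sub_distrib, ← Finset.sum_mul, hw.2, one_mul]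
    exact sub_self _
  have hterm := (Finset.sum_eq_zero_iff_of_nonneg fun j _ =>
    mul_nonneg (hw.1 j) (sub_nonneg.2 (hf j))).1 hzero i (Finset.mem_univ i)
  exact (sub_eq_zero.1 ((mul_eq_zero.1 hterm).resolve_left hi)).symm

theorem norm_le_one_of_mem_stdSimplex (hw : w ∈ stdSimplex ℝ ι) : ‖w‖ ≤ 1 := by
  simpa using stdSimplex_subset_closedBall hw

end Simplex

section SimplexCurve

/-- A locally Lipschitz curve, parametrised by positive times, whose value at time `t` is `t` times
a point of the simplex: the continuous-time analogue of the cumulative sums of a sequence of mixed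
strategies. -/
structure IsSimplexCurve {ι : Type*} [Fintype ι] (a : ℝ → ι → ℝ) : Prop where
  locallyLipschitzOn : LocallyLipschitzOn (Ioi 0) a
  inv_smul_mem : ∀ t, 0 < t → t⁻¹ • a t ∈ stdSimplex ℝ ι

variable {ι : Type*} [Fintype ι] {a : ℝ → ι → ℝ} {t : ℝ}

theorem IsSimplexCurve.nonneg (ha : IsSimplexCurve a) (ht : 0 < t) : 0 ≤ a t := fun i => by
  simpa [ht.le, ht.ne'] using mul_nonneg ht.le ((ha.inv_smul_mem t ht).1 i)

theorem IsSimplexCurve.sum_eq (ha : IsSimplexCurve a) (ht : 0 < t) : ∑ i, a t i = t := by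
  have := (ha.inv_smul_mem t ht).2
  simp only [Pi.smul_apply, smul_eq_mul, ← Finset.mul_sum] at this
  rwa [inv_mul_eq_one₀ ht.ne', eq_comm] at this

end SimplexCurve

section SuperlinearPayoff

variable {ι X : Type*}

/-- The vector payoff `g`, with one component per pure strategy of the minimising player, is
positively homogeneous and superadditive, hence concave, and it is twice continuously
differentiable on the open convex cone `Ω`. It need not be differentiable on the rest of the
nonnegative orthant, nor superadditive off `Ω`. -/
structure IsSuperlinearOn [Fintype ι] [Fintype X] (Ω : Set (ι → ℝ)) (g : (ι → ℝ) → X → ℝ) :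
    Prop where
  isOpen : IsOpen Ω
  convex : Convex ℝ Ω
  smul_mem : ∀ {r : ℝ} {a : ι → ℝ}, 0 < r → a ∈ Ω → r • a ∈ Ω
  contDiffOn : ContDiffOn ℝ 2 g Ω
  map_smul : ∀ {r : ℝ} (a : ι → ℝ), 0 < r → g (r • a) = r • g a
  add_le_map_add : ∀ {a b : ι → ℝ}, a ∈ Ω → 0 ≤ b → g a + g b ≤ g (a + b)

/-- The gradient at `a` of the mixed payoff `m ⬝ᵥ g`: its component `i` is the marginal payoff of
the pure strategy `i` of the maximising player. -/
def score [Fintype ι] [Fintype X] [DecidableEq ι] (g : (ι → ℝ) → X → ℝ) (a : ι → ℝ) (m : X → ℝ) :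
    ι → ℝ :=
  fun i => m ⬝ᵥ fderiv ℝ g a (Pi.single i 1)

/-- The duality gap of the state `(a, m)`: the best marginal payoff of the maximising player minus
the least payoff component, the latter written as a supremum of `-g`. -/
def dualityGap [Fintype ι] [Fintype X] [DecidableEq ι] (g : (ι → ℝ) → X → ℝ) (a : ι → ℝ)
    (m : X → ℝ) : ℝ :=
  (⨆ i, score g a m i) + ⨆ x, -g a x

variable [Fintype ι] [Fintype X] {Ω : Set (ι → ℝ)} {g : (ι → ℝ) → X → ℝ}
  {a b : ι → ℝ} {m k : X → ℝ}

theorem IsSuperlinearOn.hasFDerivAt (hg : IsSuperlinearOn Ω g) (ha : a ∈ Ω) :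
    HasFDerivAt g (fderiv ℝ g a) a :=
  ((hg.contDiffOn.contDiffAt (hg.isOpen.mem_nhds ha)).differentiableAt two_ne_zero).hasFDerivAt

theorem IsSuperlinearOn.le_fderiv (hg : IsSuperlinearOn Ω g) (ha : a ∈ Ω) (hb : 0 ≤ b) :
    g b ≤ fderiv ℝ g a b := by
  have hslope : Tendsto (fun r : ℝ => r⁻¹ • (g (a + r • b) - g a)) (𝓝[>] 0) (𝓝 (fderiv ℝ g a b)) :=
    (((hg.hasFDerivAt ha).hasLineDerivAt b).tendsto_slope_zero).mono_left
      (nhdsWithin_mono _ fun _ hr => ne_of_gt hr)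
  refine ge_of_tendsto hslope ?_
  filter_upwards [self_mem_nhdsWithin] with r (hr : 0 < r)
  rw [le_inv_smul_iff_of_pos hr, ← hg.map_smul b hr, le_sub_iff_add_le']
  exact hg.add_le_map_add ha (smul_nonneg hr.le hb)

theorem IsSuperlinearOn.fderiv_self (hg : IsSuperlinearOn Ω g) (ha : a ∈ Ω) :
    fderiv ℝ g a a = g a := by
  have hray : HasDerivAt (fun r : ℝ => g (r • a)) (fderiv ℝ g a a) 1 := by
    have hline : HasDerivAt (fun r : ℝ => r • a) a 1 := by
      simpa using (hasDerivAt_id (1 : ℝ)).smul_const a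
    refine HasFDerivAt.comp_hasDerivAt (1 : ℝ) ?_ hline
    simpa using hg.hasFDerivAt ha
  refine hray.unique ?_
  have hlin : HasDerivAt (fun r : ℝ => r • g a) (g a) 1 := by
    simpa using (hasDerivAt_id (1 : ℝ)).smul_const (g a)
  refine hlin.congr_of_eventuallyEq ?_
  filter_upwards [lt_mem_nhds one_pos] with r hr using hg.map_smul a hr

theorem IsSuperlinearOn.fderiv_smul (hg : IsSuperlinearOn Ω g) {r : ℝ} (hr : 0 < r) :
    fderiv ℝ g (r • a) = fderiv ℝ g a := by
  have hscale : (fun b => g (r • b)) = r • g := funext fun b => hg.map_smul b hr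
  have := fderiv_comp_smul (𝕜 := ℝ) (f := g) (x := a) r
  rw [hscale, fderiv_const_smul_field] at this
  exact (smul_right_injective _ hr.ne' this).symm

theorem IsSuperlinearOn.fderiv_dotProduct (hg : IsSuperlinearOn Ω g) (ha : a ∈ Ω) (b : ι → ℝ) :
    fderiv ℝ (fun a => m ⬝ᵥ g a) a b = m ⬝ᵥ fderiv ℝ g a b := by
  have hsum : HasFDerivAt (fun a => m ⬝ᵥ g a) _ a :=
    HasFDerivAt.fun_sum (u := Finset.univ) fun x _ =>
      (hasFDerivAt_pi'.1 (hg.hasFDerivAt ha) x).const_mul (m x)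
  rw [hsum.fderiv, _root_.sum_apply]
  rfl

variable [DecidableEq ι]

theorem dotProduct_score (b : ι → ℝ) : b ⬝ᵥ score g a m = m ⬝ᵥ fderiv ℝ g a b := by
  have hb : fderiv ℝ g a b = ∑ i, b i • fderiv ℝ g a (Pi.single i 1) := by
    conv_lhs => rw [pi_eq_sum_univ' b]
    simp only [map_sum, map_smul]
  rw [hb, dotProduct_sum]
  simp only [dotProduct_smul, smul_eq_mul]
  rfl

theorem IsSuperlinearOn.dotProduct_le_dotProduct_score (hg : IsSuperlinearOn Ω g) (ha : a ∈ Ω)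
    (hm : 0 ≤ m) (hb : 0 ≤ b) : m ⬝ᵥ g b ≤ b ⬝ᵥ score g a m := by
  rw [dotProduct_score]
  exact dotProduct_le_dotProduct_of_nonneg_left (hg.le_fderiv ha hb) hm

theorem IsSuperlinearOn.dotProduct_score_self (hg : IsSuperlinearOn Ω g) (ha : a ∈ Ω) :
    a ⬝ᵥ score g a m = m ⬝ᵥ g a := by
  rw [dotProduct_score, hg.fderiv_self ha]

-- Concavity in `a` and linearity in `m`: the game is monotone.
theorem IsSuperlinearOn.sub_dotProduct_score_sub_le (hg : IsSuperlinearOn Ω g)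
    (ha : a ∈ Ω) (hb : b ∈ Ω) (ha₀ : 0 ≤ a) (hb₀ : 0 ≤ b) (hm : 0 ≤ m) (hk : 0 ≤ k) :
    (a - b) ⬝ᵥ (score g a m - score g b k) ≤ (m - k) ⬝ᵥ (g a - g b) := by
  have hab := hg.dotProduct_le_dotProduct_score ha hm hb₀
  have hba := hg.dotProduct_le_dotProduct_score hb hk ha₀
  have haa := hg.dotProduct_score_self (m := m) ha
  have hbb := hg.dotProduct_score_self (m := k) hb
  simp only [sub_dotProduct, dotProduct_sub]
  linarith

theorem IsSuperlinearOn.score_smul (hg : IsSuperlinearOn Ω g) {r : ℝ} (hr : 0 < r) (a : ι → ℝ)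
    (m : X → ℝ) : score g (r • a) (r • m) = r • score g a m := by
  ext i
  simp only [score, hg.fderiv_smul hr, smul_dotProduct, Pi.smul_apply]

theorem IsSuperlinearOn.dualityGap_smul (hg : IsSuperlinearOn Ω g) {r : ℝ} (hr : 0 < r) :
    dualityGap g (r • a) (r • m) = r * dualityGap g a m := by
  simp only [dualityGap, score, hg.fderiv_smul hr, hg.map_smul a hr, Pi.smul_apply, smul_dotProduct,
    smul_eq_mul, mul_add, Real.mul_iSup_of_nonneg hr.le, ← mul_neg]

theorem IsSuperlinearOn.contDiffOn_score (hg : IsSuperlinearOn Ω g) :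
    ContDiffOn ℝ 1 (fun z : (ι → ℝ) × (X → ℝ) => score g z.1 z.2) (Ω ×ˢ univ) := by
  have hfderiv : ContDiffOn ℝ 1 (fderiv ℝ g) Ω :=
    hg.contDiffOn.fderiv_of_isOpen hg.isOpen (by norm_num)
  refine contDiffOn_pi.2 fun i => ContDiffOn.sum fun x _ => ?_
  refine ((contDiff_apply ℝ ℝ x).comp contDiff_snd).contDiffOn.mul ?_
  exact (contDiff_apply ℝ ℝ x).comp_contDiffOn <|
    (hfderiv.comp contDiff_fst.contDiffOn fun z hz => hz.1).clm_apply contDiffOn_const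

end SuperlinearPayoff

section GreedyPlay

variable {ι X : Type*} [Fintype ι] [Fintype X] [DecidableEq ι] {Ω : Set (ι → ℝ)}
  {g : (ι → ℝ) → X → ℝ} {a : ℝ → ι → ℝ} {m : ℝ → X → ℝ}

theorem IsSuperlinearOn.deriv_dualityGap_nonpos [Nonempty ι] [Nonempty X]
    (hg : IsSuperlinearOn Ω g) (ha : IsSimplexCurve a) (hm : IsSimplexCurve m)
    (haΩ : ∀ t, 0 < t → a t ∈ Ω) (ha_greedy : IsGreedy a fun t => score g (a t) (m t))
    (hm_greedy : IsGreedy m fun t => -g (a t)) {t : ℝ} (ht : 0 < t)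
    (ha' : DifferentiableAt ℝ a t) (hm' : DifferentiableAt ℝ m t)
    (hscore' : DifferentiableAt ℝ (fun t => ⨆ i, score g (a t) (m t) i) t)
    (hpayoff' : DifferentiableAt ℝ (fun t => ⨆ x, -g (a t) x) t) :
    deriv (fun t => dualityGap g (a t) (m t)) t ≤ 0 := by
  have hscore : HasDerivAt (fun t => score g (a t) (m t)) _ t :=
    (((hg.contDiffOn_score.contDiffAt ((hg.isOpen.prod isOpen_univ).mem_nhds
      ⟨haΩ t ht, mem_univ (m t)⟩)).differentiableAt one_ne_zero).comp t
        (ha'.prodMk hm')).hasDerivAt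
  have hpayoff : HasDerivAt (fun t => g (a t)) _ t :=
    ((hg.hasFDerivAt (haΩ t ht)).differentiableAt.comp t ha').hasDerivAt
  have hmono := dotProduct_deriv_le_of_dotProduct_sub_le ha'.hasDerivAt hscore hm'.hasDerivAt
    hpayoff <| by
      filter_upwards [lt_mem_nhds ht] with s hs
      exact hg.sub_dotProduct_score_sub_le (haΩ s hs) (haΩ t ht) (ha.nonneg hs) (ha.nonneg ht)
        (hm.nonneg hs) (hm.nonneg ht)
  calc deriv (fun t => dualityGap g (a t) (m t)) t
      = deriv (fun t => ⨆ i, score g (a t) (m t) i) t + deriv (fun t => ⨆ x, -g (a t) x) t :=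
        deriv_fun_add hscore' hpayoff'
    _ = deriv a t ⬝ᵥ deriv (fun t => score g (a t) (m t)) t
          + deriv m t ⬝ᵥ -deriv (fun t => g (a t)) t :=
        congrArg₂ _
          (ha_greedy.deriv_iSup_eq_dotProduct ht (fun _ => ha.sum_eq) ha'.hasDerivAt hscore hscore')
          (hm_greedy.deriv_iSup_eq_dotProduct ht (fun _ => hm.sum_eq) hm'.hasDerivAt hpayoff.neg
            hpayoff')
    _ ≤ 0 := by rw [dotProduct_neg]; exact sub_nonpos.2 hmono

theorem IsSuperlinearOn.antitoneOn_dualityGap [Nonempty ι] [Nonempty X]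
    (hg : IsSuperlinearOn Ω g) (ha : IsSimplexCurve a) (hm : IsSimplexCurve m)
    (haΩ : ∀ t, 0 < t → a t ∈ Ω) (ha_greedy : IsGreedy a fun t => score g (a t) (m t))
    (hm_greedy : IsGreedy m fun t => -g (a t)) :
    AntitoneOn (fun t => dualityGap g (a t) (m t)) (Ioi 0) := by
  have hscore : LocallyLipschitzOn (Ioi 0) fun t => score g (a t) (m t) :=
    locallyLipschitzOn_comp (f := fun t => (a t, m t))
      (hg.contDiffOn_score.locallyLipschitzOn (hg.convex.prod convex_univ))
      (locallyLipschitzOn_prodMk ha.locallyLipschitzOn hm.locallyLipschitzOn)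
      fun t ht => ⟨haΩ t ht, mem_univ (m t)⟩
  have hpayoff : LocallyLipschitzOn (Ioi 0) fun t => g (a t) :=
    locallyLipschitzOn_comp ((hg.contDiffOn.of_le one_le_two).locallyLipschitzOn hg.convex)
      ha.locallyLipschitzOn haΩ
  have hscore_sup := locallyLipschitzOn_iSup_apply hscore
  have hpayoff_sup := locallyLipschitzOn_iSup_apply (locallyLipschitzOn_neg_iff.2 hpayoff)
  refine antitoneOn_of_ae_deriv_nonpos ordConnected_Ioi (hscore_sup.add hpayoff_sup) ?_
  filter_upwards [ae_differentiableAt_of_locallyLipschitzOn isOpen_Ioi ordConnected_Ioi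
      ha.locallyLipschitzOn,
    ae_differentiableAt_of_locallyLipschitzOn isOpen_Ioi ordConnected_Ioi hm.locallyLipschitzOn,
    ae_differentiableAt_of_locallyLipschitzOn isOpen_Ioi ordConnected_Ioi hscore_sup,
    ae_differentiableAt_of_locallyLipschitzOn isOpen_Ioi ordConnected_Ioi hpayoff_sup]
    with t ha' hm' hscore' hpayoff' ht
  exact hg.deriv_dualityGap_nonpos ha hm haΩ ha_greedy hm_greedy ht (ha' ht) (hm' ht)
    (hscore' ht) (hpayoff' ht)

theorem IsSuperlinearOn.continuousOn_dualityGap [Nonempty ι] [Nonempty X]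
    (hg : IsSuperlinearOn Ω g) :
    ContinuousOn (fun z : (ι → ℝ) × (X → ℝ) => dualityGap g z.1 z.2) (Ω ×ˢ univ) :=
  (lipschitzWith_iSup_apply.continuous.comp_continuousOn hg.contDiffOn_score.continuousOn).add <|
    lipschitzWith_iSup_apply.continuous.comp_continuousOn <|
      (hg.contDiffOn.continuousOn.comp continuousOn_fst fun _ hz => hz.1).neg

-- By homogeneity the gap is at most linear in time, so it vanishes as `t → 0`, and it only
-- decreases afterwards.
theorem IsSuperlinearOn.dualityGap_nonpos [Nonempty ι] [Nonempty X]
    (hg : IsSuperlinearOn Ω g) (ha : IsSimplexCurve a) (hm : IsSimplexCurve m)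
    {T : Set (ι → ℝ)} (hT : IsCompact T) (hTΩ : T ⊆ Ω) (haT : ∀ t, 0 < t → t⁻¹ • a t ∈ T)
    (ha_greedy : IsGreedy a fun t => score g (a t) (m t))
    (hm_greedy : IsGreedy m fun t => -g (a t)) {t : ℝ} (ht : 0 < t) :
    dualityGap g (a t) (m t) ≤ 0 := by
  have haΩ : ∀ s, 0 < s → a s ∈ Ω := fun s hs => by
    simpa [hs.ne'] using hg.smul_mem hs (hTΩ (haT s hs))
  have hanti := hg.antitoneOn_dualityGap ha hm haΩ ha_greedy hm_greedy
  obtain ⟨C, hC⟩ := (hT.prod (isCompact_stdSimplex ℝ X)).bddAbove_image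
    (hg.continuousOn_dualityGap.mono (prod_mono hTΩ (subset_univ _)))
  have hlinear : ∀ s, 0 < s → dualityGap g (a s) (m s) ≤ s * C := by
    intro s hs
    have := hC (mem_image_of_mem _ (mk_mem_prod (haT s hs) (hm.inv_smul_mem s hs)))
    rwa [hg.dualityGap_smul (inv_pos.2 hs), inv_mul_le_iff₀ hs] at this
  have hlim : Tendsto (fun s : ℝ => s * C) (𝓝[>] 0) (𝓝 0) := by
    simpa using ((continuous_mul_const C).tendsto 0).mono_left nhdsWithin_le_nhds
  refine ge_of_tendsto hlim ?_
  filter_upwards [Ioc_mem_nhdsGT ht] with s hs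
  exact (hanti hs.1 ht hs.2).trans (hlinear s hs.1)

theorem score_le_of_dualityGap_nonpos {a : ι → ℝ} {m : X → ℝ} (hgap : dualityGap g a m ≤ 0)
    (i : ι) (x : X) : score g a m i ≤ g a x := by
  have hi : score g a m i ≤ ⨆ j, score g a m j := le_ciSup (finite_range _).bddAbove i
  have hx : -g a x ≤ ⨆ y, -g a y := le_ciSup (f := fun y => -g a y) (finite_range _).bddAbove x
  simp only [dualityGap] at hgap
  linarith

theorem IsSuperlinearOn.iSup_iInf_eq [Nonempty X] (hg : IsSuperlinearOn Ω g) {a : ι → ℝ}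
    {m : X → ℝ} (haΩ : a ∈ Ω) (ha : a ∈ stdSimplex ℝ ι) (hm : m ∈ stdSimplex ℝ X)
    (hgap : dualityGap g a m ≤ 0) :
    ⨆ p : stdSimplex ℝ ι, ⨅ x, g p x = m ⬝ᵥ g a := by
  have hle : ∀ x, m ⬝ᵥ g a ≤ g a x := fun x => by
    rw [← hg.dotProduct_score_self haΩ]
    exact dotProduct_le_of_mem_stdSimplex ha fun i => score_le_of_dualityGap_nonpos hgap i x
  have hub : ∀ p : stdSimplex ℝ ι, ⨅ x, g p x ≤ m ⬝ᵥ g a := fun p =>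
    calc ⨅ x, g p x ≤ m ⬝ᵥ g p :=
          le_dotProduct_of_mem_stdSimplex hm fun x => ciInf_le (finite_range (g p)).bddBelow x
      _ ≤ p ⬝ᵥ score g a m := hg.dotProduct_le_dotProduct_score haΩ hm.1 p.2.1
      _ ≤ m ⬝ᵥ g a := le_dotProduct_of_mem_stdSimplex hm fun x =>
          dotProduct_le_of_mem_stdSimplex p.2 fun i => score_le_of_dualityGap_nonpos hgap i x
  have : Nonempty (stdSimplex ℝ ι) := ⟨⟨a, ha⟩⟩
  exact le_antisymm (ciSup_le hub) <|
    (le_ciInf hle).trans (le_ciSup (f := fun p : stdSimplex ℝ ι => ⨅ x, g p x)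
      ⟨_, forall_mem_range.2 hub⟩ ⟨a, ha⟩)

end GreedyPlay

section RunningAverage

variable {E : Type*} [NormedAddCommGroup E] [NormedSpace ℝ E] {p q : ℕ → E}

/-- `p n` is the average of `q 0, …, q (n - 1)`, updated recursively. For `n = 0` the value `p 0` is
arbitrary, and it is forgotten at the first step. -/
def IsRunningAverage (p q : ℕ → E) : Prop :=
  ∀ n, p (n + 1) = p n + (1 / ((n : ℝ) + 1)) • (q n - p n)

theorem IsRunningAverage.natCast_smul_eq_sum (h : IsRunningAverage p q) (n : ℕ) :
    (n : ℝ) • p n = ∑ l ∈ Finset.range n, q l := by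
  induction n with
  | zero => simp
  | succ n ih =>
    have hn : (n : ℝ) + 1 ≠ 0 := n.cast_add_one_ne_zero
    rw [Finset.sum_range_succ, ← ih, h n, Nat.cast_succ, smul_add, smul_smul,
      mul_one_div_cancel hn, one_smul, add_smul, one_smul]
    abel

theorem IsRunningAverage.mem (h : IsRunningAverage p q) {s : Set E} (hs : Convex ℝ s)
    (hp : p 0 ∈ s) (hq : ∀ n, q n ∈ s) (n : ℕ) : p n ∈ s := by
  induction n with
  | zero => exact hp
  | succ n ih =>
    rw [h n]
    exact hs.add_smul_sub_mem ih (hq n)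
      ⟨by positivity, div_le_one_of_le₀ (le_add_of_nonneg_left n.cast_nonneg) (by positivity)⟩

theorem IsRunningAverage.norm_natCast_smul_sub_le (h : IsRunningAverage p q)
    (hq : ∀ n, ‖q n‖ ≤ 1) (m n : ℕ) : ‖(m : ℝ) • p m - (n : ℝ) • p n‖ ≤ |(m : ℝ) - n| := by
  wlog hmn : m ≤ n generalizing m n
  · rw [norm_sub_rev, abs_sub_comm]
    exact this n m (le_of_not_ge hmn)
  rw [norm_sub_rev, abs_sub_comm, ← Nat.cast_sub hmn, Nat.abs_cast, h.natCast_smul_eq_sum,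
    h.natCast_smul_eq_sum, ← Finset.sum_Ico_eq_sub _ hmn]
  simpa using norm_sum_le_of_le (Finset.Ico m n) fun l _ => hq l

end RunningAverage

section ScalingLimit

variable {U : Ultrafilter ℕ}

theorem exists_tendsto_of_eventually_mem {α E : Type*} [TopologicalSpace E] {U : Ultrafilter α}
    {s : Set E} (hs : IsCompact s) {f : α → E} (hf : ∀ᶠ k in (U : Filter α), f k ∈ s) :
    ∃ x ∈ s, Tendsto f U (𝓝 x) :=
  hs.ultrafilter_le_nhds (U.map f) (le_principal_iff.2 hf)

/-- The curve `b` is the limit of the sequence `p` along the ultrafilter `U` when step `k` is taken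
as the unit of time. -/
def IsScalingLimit {E : Type*} [TopologicalSpace E] (U : Ultrafilter ℕ) (p : ℕ → E) (b : ℝ → E) :
    Prop :=
  ∀ t, 0 < t → ∀ N : ℕ → ℕ, Tendsto (fun k => (N k : ℝ) / k) U (𝓝 t) →
    Tendsto (fun k => p (N k)) U (𝓝 (b t))

theorem tendsto_atTop_of_tendsto_div {l : Filter ℕ} (hl : l ≤ atTop) {N : ℕ → ℕ} {t : ℝ}
    (ht : 0 < t) (hN : Tendsto (fun k => (N k : ℝ) / k) l (𝓝 t)) : Tendsto N l atTop := by
  refine tendsto_natCast_atTop_iff.1 <|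
    (hN.pos_mul_atTop ht ((tendsto_natCast_atTop_atTop (R := ℝ)).mono_left hl)).congr' ?_
  filter_upwards [hl (eventually_ne_atTop 0)] with k hk
  exact div_mul_cancel₀ _ (Nat.cast_ne_zero.2 hk)

theorem tendsto_floor_mul_div (hU : (U : Filter ℕ) ≤ atTop) {t : ℝ} (ht : 0 < t) :
    Tendsto (fun k : ℕ => (⌊t * (k : ℝ)⌋₊ : ℝ) / k) U (𝓝 t) :=
  (tendsto_nat_floor_mul_div_atTop ht.le).comp (tendsto_natCast_atTop_atTop.mono_left hU)

section Topological

variable {E F : Type*} [TopologicalSpace E] [TopologicalSpace F] {p : ℕ → E} {b : ℝ → E}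

theorem IsScalingLimit.comp (hb : IsScalingLimit U p b) {f : E → F}
    (hf : ∀ t, 0 < t → ContinuousAt f (b t)) : IsScalingLimit U (f ∘ p) (f ∘ b) :=
  fun t ht N hN => (hf t ht).tendsto.comp (hb t ht N hN)

theorem IsScalingLimit.prodMk (hb : IsScalingLimit U p b) {p' : ℕ → F} {b' : ℝ → F}
    (hb' : IsScalingLimit U p' b') : IsScalingLimit U (fun n => (p n, p' n)) fun t => (b t, b' t) :=
  fun t ht N hN => (hb t ht N hN).prodMk_nhds (hb' t ht N hN)

theorem IsScalingLimit.mem_of_isClosed (hU : (U : Filter ℕ) ≤ atTop) (hb : IsScalingLimit U p b)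
    {s : Set E} (hs : IsClosed s) (hp : ∀ᶠ n in atTop, p n ∈ s) {t : ℝ} (ht : 0 < t) : b t ∈ s :=
  have hfloor := tendsto_floor_mul_div hU ht
  hs.mem_of_tendsto (hb t ht _ hfloor) ((tendsto_atTop_of_tendsto_div hU ht hfloor).eventually hp)

end Topological

section Normed

variable {E : Type*} [NormedAddCommGroup E] [NormedSpace ℝ E] {p q : ℕ → E} {b : ℝ → E}

theorem IsRunningAverage.exists_isScalingLimit (hpq : IsRunningAverage p q)
    (hU : (U : Filter ℕ) ≤ atTop) {s : Set E} (hs : IsCompact s) (hp : ∀ n, p n ∈ s)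
    (hq : ∀ n, ‖q n‖ ≤ 1) : ∃ b, IsScalingLimit U p b := by
  choose b _ hb using fun t : ℝ => exists_tendsto_of_eventually_mem (U := U) hs
    (f := fun k : ℕ => p ⌊t * (k : ℝ)⌋₊) (Eventually.of_forall fun k => hp _)
  refine ⟨b, fun t ht N hN => ?_⟩
  have hfloor := tendsto_floor_mul_div hU ht
  have hdiff : Tendsto (fun k : ℕ => ((N k : ℝ) / k) • p (N k) -
      ((⌊t * (k : ℝ)⌋₊ : ℝ) / k) • p ⌊t * (k : ℝ)⌋₊) U (𝓝 0) := by
    refine squeeze_zero_norm (fun k => ?_) (by simpa using (hN.sub hfloor).abs)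
    rw [div_eq_inv_mul, div_eq_inv_mul, ← mul_sub, mul_smul, mul_smul, ← smul_sub, norm_smul,
      Real.norm_eq_abs, abs_mul]
    exact mul_le_mul_of_nonneg_left (hpq.norm_natCast_smul_sub_le hq _ _) (abs_nonneg _)
  have hsum : Tendsto (fun k => ((N k : ℝ) / k) • p (N k)) U (𝓝 (t • b t)) := by
    simpa using hdiff.add (hfloor.smul (hb t))
  have hlim := (hN.inv₀ ht.ne').smul hsum
  rw [inv_smul_smul₀ ht.ne'] at hlim
  refine hlim.congr' ?_
  filter_upwards [hN.eventually_ne ht.ne'] with k hk using inv_smul_smul₀ hk _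

theorem IsScalingLimit.locallyLipschitzOn (hb : IsScalingLimit U p b)
    (hU : (U : Filter ℕ) ≤ atTop) (hpq : IsRunningAverage p q) (hq : ∀ n, ‖q n‖ ≤ 1) :
    LocallyLipschitzOn (Ioi 0) fun t => t • b t := by
  have hlip : LipschitzOnWith 1 (fun t => t • b t) (Ioi 0) := by
    refine LipschitzOnWith.of_dist_le_mul fun s (hs : 0 < s) t (ht : 0 < t) => ?_
    have hs_floor := tendsto_floor_mul_div hU hs
    have ht_floor := tendsto_floor_mul_div hU ht
    rw [NNReal.coe_one, one_mul, dist_eq_norm, Real.dist_eq]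
    refine le_of_tendsto_of_tendsto' ((hs_floor.smul (hb s hs _ hs_floor)).sub
      (ht_floor.smul (hb t ht _ ht_floor))).norm (hs_floor.sub ht_floor).abs fun k => ?_
    rw [div_eq_inv_mul, div_eq_inv_mul, ← mul_sub, mul_smul, mul_smul, ← smul_sub, norm_smul,
      Real.norm_eq_abs, abs_mul]
    exact mul_le_mul_of_nonneg_left (hpq.norm_natCast_smul_sub_le hq _ _) (abs_nonneg _)
  exact fun t _ => ⟨1, Ioi 0, self_mem_nhdsWithin, hlip⟩

end Normed

variable {ι : Type*} [Fintype ι] {p q : ℕ → ι → ℝ} {b : ℝ → ι → ℝ}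

theorem IsScalingLimit.isSimplexCurve (hb : IsScalingLimit U p b) (hU : (U : Filter ℕ) ≤ atTop)
    (hpq : IsRunningAverage p q) (hp : ∀ n, p n ∈ stdSimplex ℝ ι)
    (hq : ∀ n, q n ∈ stdSimplex ℝ ι) : IsSimplexCurve fun t => t • b t where
  locallyLipschitzOn :=
    hb.locallyLipschitzOn hU hpq fun n => norm_le_one_of_mem_stdSimplex (hq n)
  inv_smul_mem t ht := by
    rw [inv_smul_smul₀ ht.ne']
    exact hb.mem_of_isClosed hU (isClosed_stdSimplex ℝ ι) (Eventually.of_forall hp) ht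

theorem IsScalingLimit.exists_tendsto_ne_zero (hb : IsScalingLimit U p b)
    (hU : (U : Filter ℕ) ≤ atTop) (hpq : IsRunningAverage p q) {i : ι} {s t : ℝ} (hs : 0 < s)
    (hst : s < t) (hne : (s • b s) i ≠ (t • b t) i) :
    ∃ τ ∈ Icc s t, ∃ N : ℕ → ℕ, Tendsto (fun k => (N k : ℝ) / k) U (𝓝 τ) ∧
      ∀ᶠ k in (U : Filter ℕ), q (N k) i ≠ 0 := by
  have hs_floor := tendsto_floor_mul_div hU hs
  have ht_floor := tendsto_floor_mul_div hU (hs.trans hst)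
  have hactive : ∀ᶠ k : ℕ in (U : Filter ℕ),
      ∃ n, n ∈ Finset.Ico ⌊s * (k : ℝ)⌋₊ ⌊t * (k : ℝ)⌋₊ ∧ q n i ≠ 0 := by
    have hs_lim := tendsto_pi_nhds.1 (hs_floor.smul (hb s hs _ hs_floor)) i
    have ht_lim := tendsto_pi_nhds.1 (ht_floor.smul (hb t (hs.trans hst) _ ht_floor)) i
    filter_upwards [(ht_lim.sub hs_lim).eventually_ne (sub_ne_zero.2 hne.symm)] with k hk
    refine Finset.exists_ne_zero_of_sum_ne_zero fun hzero => hk ?_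
    have hle : ⌊s * (k : ℝ)⌋₊ ≤ ⌊t * (k : ℝ)⌋₊ := by gcongr
    rw [div_eq_inv_mul, div_eq_inv_mul, mul_smul, mul_smul, hpq.natCast_smul_eq_sum,
      hpq.natCast_smul_eq_sum, ← Pi.sub_apply, ← smul_sub, ← Finset.sum_Ico_eq_sub _ hle,
      Pi.smul_apply, Finset.sum_apply, hzero, smul_zero]
  obtain ⟨N, hN⟩ := hactive.choice
  have hlower : ∀ᶠ k : ℕ in U, (⌊s * (k : ℝ)⌋₊ : ℝ) / k ≤ (N k : ℝ) / k :=
    hN.mono fun k hk => by gcongr; exact (Finset.mem_Ico.1 hk.1).1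
  have hupper : ∀ᶠ k : ℕ in U, (N k : ℝ) / k ≤ (⌊t * (k : ℝ)⌋₊ : ℝ) / k :=
    hN.mono fun k hk => by gcongr; exact (Finset.mem_Ico.1 hk.1).2.le
  obtain ⟨τ, -, hτ⟩ := exists_tendsto_of_eventually_mem (U := U)
    (isCompact_Icc (a := 0) (b := t + 1)) (f := fun k => (N k : ℝ) / k) <| by
      filter_upwards [hupper, ht_floor.eventually_le_const (lt_add_one t)] with k hk hk'
      exact ⟨by positivity, hk.trans hk'⟩
  exact ⟨τ, ⟨le_of_tendsto_of_tendsto hs_floor hτ hlower,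
    le_of_tendsto_of_tendsto hτ ht_floor hupper⟩, N, hτ, hN.mono fun k hk => hk.2⟩

theorem IsScalingLimit.isGreedy (hb : IsScalingLimit U p b) (hU : (U : Filter ℕ) ≤ atTop)
    (hpq : IsRunningAverage p q) {H : ℕ → ι → ℝ} {h : ℝ → ι → ℝ} (hh : IsScalingLimit U H h)
    (hbest : ∀ᶠ n in atTop, ∀ i, q n i ≠ 0 → ∀ j, H n j ≤ H n i) :
    IsGreedy (fun t => t • b t) h := by
  intro i s t hs hst hne
  obtain ⟨τ, hτ, N, hN, hactive⟩ := hb.exists_tendsto_ne_zero hU hpq hs hst hne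
  have hτ_pos : 0 < τ := hs.trans_le hτ.1
  have hlim := tendsto_pi_nhds.1 (hh τ hτ_pos N hN)
  refine ⟨τ, hτ, fun j => le_of_tendsto_of_tendsto (hlim j) (hlim i) ?_⟩
  filter_upwards [hactive, (tendsto_atTop_of_tendsto_div hU hτ_pos hN).eventually hbest]
    with k hk hbest_k using hbest_k i hk j

end ScalingLimit

section BestResponse

variable {ι X : Type*} [Fintype ι] [Fintype X] [DecidableEq ι] {Ω : Set (ι → ℝ)}
  {g : (ι → ℝ) → X → ℝ} {p q : ℕ → ι → ℝ} {μ ν : ℕ → X → ℝ} {T : Set (ι → ℝ)}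

theorem IsSuperlinearOn.dualityGap_nonpos_of_isScalingLimit [Nonempty ι] [Nonempty X]
    (hg : IsSuperlinearOn Ω g) (hpq : IsRunningAverage p q) (hμν : IsRunningAverage μ ν)
    (hp : ∀ n, p n ∈ stdSimplex ℝ ι) (hq : ∀ n, q n ∈ stdSimplex ℝ ι)
    (hμ : ∀ n, μ n ∈ stdSimplex ℝ X) (hν : ∀ n, ν n ∈ stdSimplex ℝ X)
    (hT : IsCompact T) (hTΩ : T ⊆ Ω) (hpT : ∀ᶠ n in atTop, p n ∈ T)
    (hq_best : ∀ᶠ n in atTop, ∀ i, q n i ≠ 0 →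
      ∀ j, score g (p n) (μ n) j ≤ score g (p n) (μ n) i)
    (hν_best : ∀ᶠ n in atTop, ∀ x, ν n x ≠ 0 → ∀ y, g (p n) x ≤ g (p n) y)
    {U : Ultrafilter ℕ} (hU : (U : Filter ℕ) ≤ atTop) {b : ℝ → ι → ℝ} {β : ℝ → X → ℝ}
    (hb : IsScalingLimit U p b) (hβ : IsScalingLimit U μ β) :
    dualityGap g (b 1) (β 1) ≤ 0 := by
  have hbT : ∀ t, 0 < t → b t ∈ T := fun t ht => hb.mem_of_isClosed hU hT.isClosed hpT ht
  have hscore : IsScalingLimit U (fun n => score g (p n) (μ n)) fun t => score g (b t) (β t) :=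
    (hb.prodMk hβ).comp (f := fun z => score g z.1 z.2) fun t ht =>
      hg.contDiffOn_score.continuousOn.continuousAt <|
        (hg.isOpen.prod isOpen_univ).mem_nhds ⟨hTΩ (hbT t ht), mem_univ _⟩
  have hpayoff : IsScalingLimit U (fun n => -g (p n)) fun t => -g (b t) :=
    hb.comp (f := fun a => -g a) fun t ht =>
      (hg.hasFDerivAt (hTΩ (hbT t ht))).continuousAt.neg
  have hp_greedy : IsGreedy (fun t => t • b t) fun t => score g (t • b t) (t • β t) :=
    (hb.isGreedy hU hpq hscore hq_best).of_eq_smul fun t ht => hg.score_smul ht _ _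
  have hμ_greedy : IsGreedy (fun t => t • β t) fun t => -g (t • b t) :=
    (hβ.isGreedy hU hμν hpayoff
      (hν_best.mono fun n hn x hx y => neg_le_neg (hn x hx y))).of_eq_smul fun t ht => by
        rw [hg.map_smul _ ht, smul_neg]
  have hgap := hg.dualityGap_nonpos (hb.isSimplexCurve hU hpq hp hq)
    (hβ.isSimplexCurve hU hμν hμ hν) hT hTΩ
    (fun t ht => by rw [inv_smul_smul₀ ht.ne']; exact hbT t ht) hp_greedy hμ_greedy one_pos
  rwa [one_smul, one_smul] at hgap

theorem IsSuperlinearOn.tendsto_dotProduct_of_best_response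
    (hg : IsSuperlinearOn Ω g) (hpq : IsRunningAverage p q) (hμν : IsRunningAverage μ ν)
    (hp : ∀ n, p n ∈ stdSimplex ℝ ι) (hq : ∀ n, q n ∈ stdSimplex ℝ ι)
    (hμ : ∀ n, μ n ∈ stdSimplex ℝ X) (hν : ∀ n, ν n ∈ stdSimplex ℝ X)
    (hT : IsCompact T) (hTΩ : T ⊆ Ω) (hpT : ∀ᶠ n in atTop, p n ∈ T)
    (hq_best : ∀ᶠ n in atTop, ∀ i, q n i ≠ 0 →
      ∀ j, score g (p n) (μ n) j ≤ score g (p n) (μ n) i)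
    (hν_best : ∀ᶠ n in atTop, ∀ x, ν n x ≠ 0 → ∀ y, g (p n) x ≤ g (p n) y) :
    Tendsto (fun n => μ n ⬝ᵥ g (p n)) atTop (𝓝 (⨆ a : stdSimplex ℝ ι, ⨅ x, g a x)) := by
  have : Nonempty ι := nonempty_of_mem_stdSimplex (hp 0)
  have : Nonempty X := nonempty_of_mem_stdSimplex (hμ 0)
  refine tendsto_iff_ultrafilter _ _ _ |>.2 fun U hU => ?_
  obtain ⟨b, hb⟩ := hpq.exists_isScalingLimit hU (isCompact_stdSimplex ℝ ι) hp
    fun n => norm_le_one_of_mem_stdSimplex (hq n)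
  obtain ⟨β, hβ⟩ := hμν.exists_isScalingLimit hU (isCompact_stdSimplex ℝ X) hμ
    fun n => norm_le_one_of_mem_stdSimplex (hν n)
  have hunit : Tendsto (fun k : ℕ => ((id k : ℕ) : ℝ) / k) U (𝓝 1) :=
    tendsto_const_nhds.congr' <| by
      filter_upwards [hU (eventually_ne_atTop 0)] with k hk
      exact (div_self (Nat.cast_ne_zero.2 hk)).symm
  have hbΩ : b 1 ∈ Ω := hTΩ (hb.mem_of_isClosed hU hT.isClosed hpT one_pos)
  have hgap := hg.dualityGap_nonpos_of_isScalingLimit hpq hμν hp hq hμ hν hT hTΩ hpT hq_best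
    hν_best hU hb hβ
  rw [hg.iSup_iInf_eq hbΩ
    (hb.mem_of_isClosed hU (isClosed_stdSimplex ℝ ι) (Eventually.of_forall hp) one_pos)
    (hβ.mem_of_isClosed hU (isClosed_stdSimplex ℝ X) (Eventually.of_forall hμ) one_pos) hgap]
  have hdot : Continuous fun z : (X → ℝ) × (X → ℝ) => z.1 ⬝ᵥ z.2 :=
    continuous_fst.dotProduct continuous_snd
  exact (hdot.tendsto _).comp <| (hβ 1 one_pos id hunit).prodMk_nhds <|
    (hg.hasFDerivAt hbΩ).continuousAt.tendsto.comp (hb 1 one_pos id hunit)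

end BestResponse

section GaussianPayoff

variable {K : ℕ} {θ : Fin K → ℝ} {σ : ℝ} {I : Fin K} {p : Fin K → ℝ}
  {μ : {x : Fin K // x ≠ I} → ℝ}

/-- The vector payoff of Gaussian best-arm identification: its component `x` is `D(p, x)`. -/
def gaussianPayoff (θ : Fin K → ℝ) (σ : ℝ) (I : Fin K) (p : Fin K → ℝ) :
    {x : Fin K // x ≠ I} → ℝ :=
  fun x => Dg θ σ I p x

/-- The squared gap of arm `x` to arm `I`, in units of twice the variance: the coefficient of the
homogeneous rational function `p_I p_x / (p_I + p_x)` in `D(p, x)`. -/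
def gapWeight (θ : Fin K → ℝ) (σ : ℝ) (I x : Fin K) : ℝ :=
  (θ I - θ x) ^ 2 / (2 * σ ^ 2)

/-- The open convex cone on which none of the denominators `p_I + p_x` of the payoff vanishes. -/
def regularCone (I : Fin K) : Set (Fin K → ℝ) :=
  {p | ∀ x, x ≠ I → 0 < p I + p x}

theorem gapWeight_nonneg (x : Fin K) : 0 ≤ gapWeight θ σ I x := by
  unfold gapWeight
  positivity

theorem gapWeight_pos (hσ : σ ≠ 0) {x : Fin K} (hx : θ x ≠ θ I) : 0 < gapWeight θ σ I x := by
  have := sub_ne_zero.2 hx.symm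
  unfold gapWeight
  positivity

theorem Dg_of_pos {x : Fin K} (h : 0 < p I + p x) :
    Dg θ σ I p x = gapWeight θ σ I x * (p I * p x / (p I + p x)) :=
  if_pos h

theorem mem_regularCone_of_nonneg (hp : 0 ≤ p) (hpI : 0 < p I) : p ∈ regularCone I :=
  fun x _ => add_pos_of_pos_of_nonneg hpI (hp x)

theorem isOpen_regularCone : IsOpen (regularCone I) := by
  simp only [regularCone, ofPred_forall]
  exact isOpen_iInter_of_finite fun x => isOpen_iInter_of_finite fun _ =>
    isOpen_lt continuous_const ((continuous_apply I).add (continuous_apply x))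

theorem smul_mem_regularCone {r : ℝ} (hr : 0 < r) (hp : p ∈ regularCone I) :
    r • p ∈ regularCone I := fun x hx => by
  simpa only [Pi.smul_apply, smul_eq_mul, ← mul_add] using mul_pos hr (hp x hx)

theorem convex_regularCone : Convex ℝ (regularCone I) :=
  convex_iff_forall_pos.2 fun a ha b hb r s hr hs _ x hx => by
    have := add_pos (smul_mem_regularCone hr ha x hx) (smul_mem_regularCone hs hb x hx)
    simp only [Pi.add_apply]
    linarith

theorem Dg_smul {r : ℝ} (hr : 0 < r) (x : Fin K) : Dg θ σ I (r • p) x = r * Dg θ σ I p x := by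
  simp only [Dg, Pi.smul_apply, smul_eq_mul, ← mul_add, mul_pos_iff_of_pos_left hr]
  split_ifs with h
  · field_simp
  · rw [mul_zero]

theorem mul_div_add_superadditive {a b c d : ℝ} (hab : 0 < a + b) (hcd : 0 < c + d) :
    a * b / (a + b) + c * d / (c + d) ≤ (a + c) * (b + d) / (a + c + (b + d)) := by
  have hsum : 0 < a + c + (b + d) := by linarith
  rw [← sub_nonneg]
  have : (a + c) * (b + d) / (a + c + (b + d)) - (a * b / (a + b) + c * d / (c + d)) =
      (a * d - b * c) ^ 2 / ((a + b) * (c + d) * (a + c + (b + d))) := by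
    field_simp
    ring
  rw [this]
  positivity

theorem Dg_add_le {a b : Fin K → ℝ} {x : Fin K} (ha : 0 < a I + a x) (hb : 0 ≤ b) :
    Dg θ σ I a x + Dg θ σ I b x ≤ Dg θ σ I (a + b) x := by
  rcases (add_nonneg (hb I) (hb x)).eq_or_lt with hzero | hpos
  · obtain ⟨hI, hx⟩ := (add_eq_zero_iff_of_nonneg (hb I) (hb x)).1 hzero.symm
    simp only [Dg, Pi.add_apply, hI, hx, add_zero, lt_irrefl, if_false, le_refl]
  · have hab : 0 < (a + b) I + (a + b) x := by simp only [Pi.add_apply]; linarith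
    rw [Dg_of_pos ha, Dg_of_pos hpos, Dg_of_pos hab, ← mul_add]
    exact mul_le_mul_of_nonneg_left (mul_div_add_superadditive ha hpos) (gapWeight_nonneg x)

theorem isSuperlinearOn_gaussianPayoff :
    IsSuperlinearOn (regularCone I) (gaussianPayoff θ σ I) where
  isOpen := isOpen_regularCone
  convex := convex_regularCone
  smul_mem := smul_mem_regularCone
  contDiffOn := by
    refine contDiffOn_pi.2 fun x => ?_
    have hcoord : ∀ i : Fin K, ContDiffOn ℝ 2 (fun p : Fin K → ℝ => p i) (regularCone I) :=
      fun i => (contDiff_apply ℝ ℝ i).contDiffOn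
    exact (contDiffOn_const.mul (((hcoord I).mul (hcoord x)).div ((hcoord I).add (hcoord x))
      fun p hp => (hp x x.2).ne')).congr fun p hp => Dg_of_pos (hp x x.2)
  map_smul _ hr := funext fun x => Dg_smul hr x.1
  add_le_map_add ha hb x := Dg_add_le (ha x x.2) hb

theorem hasFDerivAt_Dg {x : Fin K} (hpos : 0 < p I + p x) :
    HasFDerivAt (fun p => Dg θ σ I p x)
      (gapWeight θ σ I x • ((p x / (p I + p x)) ^ 2 • ContinuousLinearMap.proj (R := ℝ) I +
        (p I / (p I + p x)) ^ 2 • ContinuousLinearMap.proj (R := ℝ) x) :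
          (Fin K → ℝ) →L[ℝ] ℝ) p := by
  have hI : HasFDerivAt (fun p : Fin K → ℝ => p I) _ p := hasFDerivAt_apply (𝕜 := ℝ) I p
  have hx : HasFDerivAt (fun p : Fin K → ℝ => p x) _ p := hasFDerivAt_apply (𝕜 := ℝ) x p
  have hquot := ((hI.fun_mul hx).fun_mul
    ((hasDerivAt_inv hpos.ne').comp_hasFDerivAt p (hI.fun_add hx))).const_mul (gapWeight θ σ I x)
  have hev : ∀ᶠ p' : Fin K → ℝ in 𝓝 p, 0 < p' I + p' x :=
    (hI.continuousAt.add hx.continuousAt).eventually (lt_mem_nhds hpos)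
  refine (hquot.congr_of_eventuallyEq <| hev.mono fun p' hp' => Dg_of_pos hp').congr_fderiv ?_
  ext v
  simp only [smul_add, neg_smul, smul_neg, Function.comp_apply, add_apply, neg_apply, smul_apply,
    ContinuousLinearMap.proj_apply, smul_eq_mul]
  field_simp
  ring

theorem fderiv_gaussianPayoff_apply (hp : p ∈ regularCone I) (v : Fin K → ℝ)
    (x : {x : Fin K // x ≠ I}) :
    fderiv ℝ (gaussianPayoff θ σ I) p v x = gapWeight θ σ I x *
      ((p x / (p I + p x)) ^ 2 * v I + (p I / (p I + p x)) ^ 2 * v x) := by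
  have hcomp := hasFDerivAt_pi'.1
    ((isSuperlinearOn_gaussianPayoff (θ := θ) (σ := σ)).hasFDerivAt hp) x
  exact DFunLike.congr_fun (hcomp.unique (hasFDerivAt_Dg (hp x x.2))) v

theorem score_gaussianPayoff_self (hp : p ∈ regularCone I) :
    score (gaussianPayoff θ σ I) p μ I =
      ∑ x, μ x * (gapWeight θ σ I x * (p x / (p I + p x)) ^ 2) := by
  rw [score, dotProduct]
  refine Finset.sum_congr rfl fun x _ => ?_
  rw [fderiv_gaussianPayoff_apply hp, Pi.single_eq_same, Pi.single_eq_of_ne x.2]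
  ring

theorem score_gaussianPayoff_of_ne (hp : p ∈ regularCone I) (x : {x : Fin K // x ≠ I}) :
    score (gaussianPayoff θ σ I) p μ x = μ x * (gapWeight θ σ I x * (p I / (p I + p x)) ^ 2) := by
  rw [score, dotProduct, Finset.sum_eq_single x]
  · rw [fderiv_gaussianPayoff_apply hp, Pi.single_eq_same, Pi.single_eq_of_ne x.2.symm]
    ring
  · intro y _ hyx
    rw [fderiv_gaussianPayoff_apply hp, Pi.single_eq_of_ne x.2.symm,
      Pi.single_eq_of_ne (Subtype.coe_injective.ne hyx)]
    ring
  · simp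

theorem gradFg_eq_score (hp : p ∈ regularCone I) :
    gradFg θ σ I p μ = score (gaussianPayoff θ σ I) p μ :=
  funext fun _ => isSuperlinearOn_gaussianPayoff.fderiv_dotProduct hp _

theorem le_score_self_sub_score (hp : p ∈ regularCone I) (hμ : 0 ≤ μ) (x : {x : Fin K // x ≠ I}) :
    μ x * (gapWeight θ σ I x * ((p x - p I) / (p I + p x))) ≤
      score (gaussianPayoff θ σ I) p μ I - score (gaussianPayoff θ σ I) p μ x := by
  have hterm : μ x * (gapWeight θ σ I x * (p x / (p I + p x)) ^ 2) ≤
      score (gaussianPayoff θ σ I) p μ I := by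
    rw [score_gaussianPayoff_self hp]
    exact Finset.single_le_sum (f := fun y => μ y * (gapWeight θ σ I y * (p y / (p I + p y)) ^ 2))
      (fun y _ => mul_nonneg (hμ y) (mul_nonneg (gapWeight_nonneg _) (sq_nonneg _)))
      (Finset.mem_univ x)
  have hne := (hp x x.2).ne'
  have hdiff : (p x - p I) / (p I + p x) = (p x / (p I + p x)) ^ 2 - (p I / (p I + p x)) ^ 2 := by
    field_simp
    ring
  rw [score_gaussianPayoff_of_ne hp, hdiff, mul_sub, mul_sub]
  linarith

end GaussianPayoff

section LinearMaximizationOracle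

variable {K : ℕ} {θ : Fin K → ℝ} {σ : ℝ} {I : Fin K} {p q : Fin K → ℝ}
  {μ ν : {x : Fin K // x ≠ I} → ℝ} {f : Fin K → ℝ}

theorem le_of_mem_Cg (hf : f ∈ Cg θ σ I p μ) (φ : (Fin K → ℝ) →L[ℝ] ℝ) {ψ : (Fin K → ℝ) → ℝ}
    (hψ : ContinuousAt ψ p)
    (hle : ∀ a, (∀ i, 0 < a i) → ψ a ≤ φ (score (gaussianPayoff θ σ I) a μ)) : ψ p ≤ φ f := by
  refine convexHull_min (t := {f | ψ p ≤ φ f}) ?_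
    (convex_halfSpace_ge φ.toLinearMap.isLinear _) hf
  rintro f ⟨a, ha, hap, hgrad⟩
  refine le_of_tendsto_of_tendsto' (hψ.tendsto.comp hap) ((φ.continuous.tendsto f).comp hgrad)
    fun n => ?_
  have ha_pos := (ha n).2
  have := hle (a n) ha_pos
  rwa [← gradFg_eq_score (mem_regularCone_of_nonneg (fun i => (ha_pos i).le) (ha_pos I))] at this

theorem eq_score_of_mem_Cg (hp : p ∈ regularCone I) (hf : f ∈ Cg θ σ I p μ) :
    f = score (gaussianPayoff θ σ I) p μ := by
  have hcont : ContinuousAt (fun a => score (gaussianPayoff θ σ I) a μ) p :=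
    (isSuperlinearOn_gaussianPayoff.contDiffOn_score.continuousOn.continuousAt
      ((isOpen_regularCone.prod isOpen_univ).mem_nhds ⟨hp, mem_univ μ⟩)).comp
        (f := fun a => (a, μ)) (by fun_prop)
  funext i
  have hcont_i := continuousAt_pi.1 hcont i
  refine le_antisymm ?_ (le_of_mem_Cg hf (.proj i) hcont_i fun _ _ => le_rfl)
  exact neg_le_neg_iff.1 (le_of_mem_Cg hf (-.proj i) hcont_i.neg fun _ _ => le_rfl)

theorem mem_stdSimplex_of_mem_LMOpg (hq : q ∈ LMOpg θ σ I p μ) : q ∈ stdSimplex ℝ (Fin K) :=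
  convexHull_min (fun _ h => h.1) (convex_stdSimplex ℝ _) hq

theorem apply_eq_zero_of_mem_LMOpg (hq : q ∈ LMOpg θ σ I p μ) {i : Fin K}
    (hi : ∀ f ∈ Cg θ σ I p μ, ∃ j, f i < f j) : q i = 0 := by
  refine convexHull_min (t := {q | q i = 0}) ?_
    (convex_hyperplane (LinearMap.proj (R := ℝ) i).isLinear 0) hq
  rintro q ⟨hq, f, hf, hmax⟩
  have hle : ∀ j, f j ≤ q ⬝ᵥ f := fun j => by
    simpa [Pi.single_apply, dotProduct] using hmax _ (single_mem_stdSimplex ℝ j)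
  obtain ⟨j, hj⟩ := hi f hf
  by_contra hqi
  exact (hj.trans_le (hle j)).ne (apply_eq_of_forall_le_dotProduct hq hle hqi)

theorem score_le_score_of_mem_LMOpg (hp : p ∈ regularCone I) (hq : q ∈ LMOpg θ σ I p μ) {i : Fin K}
    (hi : q i ≠ 0) (j : Fin K) :
    score (gaussianPayoff θ σ I) p μ j ≤ score (gaussianPayoff θ σ I) p μ i := by
  contrapose! hi
  exact apply_eq_zero_of_mem_LMOpg hq fun f hf => ⟨j, eq_score_of_mem_Cg hp hf ▸ hi⟩

theorem gaussianPayoff_le_of_mem_LMOmug (hν : ν ∈ LMOmug θ σ I p) {x : {x : Fin K // x ≠ I}}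
    (hx : ν x ≠ 0) (y : {x : Fin K // x ≠ I}) :
    gaussianPayoff θ σ I p x ≤ gaussianPayoff θ σ I p y := by
  have hmin : ν ⬝ᵥ gaussianPayoff θ σ I p = ⨅ x, gaussianPayoff θ σ I p x := hν.2
  have hle : ∀ z, (-gaussianPayoff θ σ I p) z ≤ ν ⬝ᵥ -gaussianPayoff θ σ I p := fun z => by
    rw [dotProduct_neg, hmin]
    exact neg_le_neg (ciInf_le (finite_range _).bddBelow z)
  have hx_eq := apply_eq_of_forall_le_dotProduct hν.1 hle hx
  exact neg_le_neg_iff.1 ((hle y).trans_eq hx_eq.symm)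

theorem exists_pos_of_mem_Cg (hw : ∀ x, x ≠ I → 0 < gapWeight θ σ I x)
    (hμ : μ ∈ stdSimplex ℝ {x : Fin K // x ≠ I}) (hf : f ∈ Cg θ σ I p μ) : ∃ i, 0 < f i := by
  have hsum : μ ⬝ᵥ gaussianPayoff θ σ I 1 ≤ ∑ i, f i := by
    have := le_of_mem_Cg hf (∑ i, .proj i) continuousAt_const fun a ha => by
      simpa [dotProduct] using isSuperlinearOn_gaussianPayoff.dotProduct_le_dotProduct_score
        (mem_regularCone_of_nonneg (fun i => (ha i).le) (ha I)) hμ.1 (zero_le_one' (Fin K → ℝ))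
    simpa [dotProduct] using this
  have hpos : 0 < μ ⬝ᵥ gaussianPayoff θ σ I 1 := by
    have hpayoff : ∀ x, 0 < gaussianPayoff θ σ I 1 x := fun x => by
      rw [gaussianPayoff, Dg_of_pos (by norm_num)]
      exact mul_pos (hw x x.2) (by norm_num)
    obtain ⟨x, -, hx⟩ := Finset.exists_ne_zero_of_sum_ne_zero (hμ.2.trans_ne one_ne_zero)
    exact Finset.sum_pos' (fun y _ => mul_nonneg (hμ.1 y) (hpayoff y).le)
      ⟨x, Finset.mem_univ x, mul_pos ((hμ.1 x).lt_of_ne' hx) (hpayoff x)⟩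
  by_contra! hnonpos
  exact (hpos.trans_le hsum).not_ge (Finset.sum_nonpos fun i _ => hnonpos i)

theorem apply_eq_zero_of_mem_LMOpg_of_lt (hw : ∀ x, x ≠ I → 0 < gapWeight θ σ I x)
    (hp : 0 ≤ p) (hμ : μ ∈ stdSimplex ℝ {x : Fin K // x ≠ I}) (hq : q ∈ LMOpg θ σ I p μ)
    {x : Fin K} (hx : p I < p x) : q x = 0 := by
  have hxI : x ≠ I := by rintro rfl; exact hx.false
  lift x to {x : Fin K // x ≠ I} using hxI
  refine apply_eq_zero_of_mem_LMOpg hq fun f hf => ?_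
  rcases (hμ.1 x).eq_or_lt with hμx | hμx
  · obtain ⟨i, hi⟩ := exists_pos_of_mem_Cg hw hμ hf
    refine ⟨i, lt_of_le_of_lt ?_ hi⟩
    refine neg_nonneg.1 (le_of_mem_Cg hf (-.proj x.1) (ψ := 0) continuousAt_const fun a ha => ?_)
    simp [score_gaussianPayoff_of_ne (mem_regularCone_of_nonneg (fun i => (ha i).le) (ha I)), ← hμx]
  · have hpI : 0 ≤ p I := hp I
    have hpos : 0 < p I + p x := by linarith
    refine ⟨I, sub_pos.1 <| lt_of_lt_of_le ?_ <| le_of_mem_Cg hf (.proj I - .proj x.1)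
      (ψ := fun a => μ x * (gapWeight θ σ I x * ((a x - a I) / (a I + a x))))
      (by fun_prop (disch := exact hpos.ne')) fun a ha =>
        le_score_self_sub_score (mem_regularCone_of_nonneg (fun i => (ha i).le) (ha I)) hμ.1 x⟩
    exact mul_pos hμx (mul_pos (hw x x.2) (div_pos (sub_pos.2 hx) hpos))

end LinearMaximizationOracle

section Exploration

variable {ι : Type*} [Fintype ι] {p q : ℕ → ι → ℝ} {i : ι}

theorem IsRunningAverage.natCast_mul_apply_le (h : IsRunningAverage p q)
    (hq : ∀ n, q n ∈ stdSimplex ℝ ι) {j : ι} (hzero : ∀ n, p n i < p n j → q n j = 0) (n : ℕ) :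
    n * p n j ≤ n * p n i + 1 := by
  have hstep (n : ℕ) (k : ι) : ((n + 1 : ℕ) : ℝ) * p (n + 1) k = n * p n k + q n k := by
    have := congrFun (h.natCast_smul_eq_sum (n + 1)) k
    rwa [Finset.sum_range_succ, ← h.natCast_smul_eq_sum] at this
  induction n with
  | zero => simp
  | succ n ih =>
    rw [hstep, hstep]
    have hqi : 0 ≤ q n i := (hq n).1 i
    rcases lt_or_ge (p n i) (p n j) with hlt | hge
    · linarith [hzero n hlt]
    · have hqj : q n j ≤ 1 := (mem_Icc_of_mem_stdSimplex (hq n) j).2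
      linarith [mul_le_mul_of_nonneg_left hge (n.cast_nonneg (α := ℝ))]

theorem IsRunningAverage.exists_pos_eventually_le_apply (h : IsRunningAverage p q)
    (hp : ∀ n, p n ∈ stdSimplex ℝ ι) (hq : ∀ n, q n ∈ stdSimplex ℝ ι)
    (hzero : ∀ n j, p n i < p n j → q n j = 0) :
    ∃ c > 0, ∀ᶠ n in atTop, c ≤ p n i := by
  have hcard : (0 : ℝ) < Fintype.card ι := by
    have : Nonempty ι := ⟨i⟩
    exact_mod_cast Fintype.card_pos
  refine ⟨1 / (2 * Fintype.card ι), by positivity, ?_⟩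
  filter_upwards [tendsto_natCast_atTop_atTop.eventually_ge_atTop (2 * Fintype.card ι : ℝ)]
    with n hn
  have hsum : (n : ℝ) ≤ Fintype.card ι * (n * p n i + 1) :=
    calc (n : ℝ) = ∑ j, n * p n j := by rw [← Finset.mul_sum, (hp n).2, mul_one]
      _ ≤ ∑ _j : ι, (n * p n i + 1) :=
        Finset.sum_le_sum fun j _ => h.natCast_mul_apply_le hq (hzero · j) n
      _ = Fintype.card ι * (n * p n i + 1) := by simp [mul_add]
  have hn_pos : (0 : ℝ) < n := by linarith
  rw [div_le_iff₀ (by positivity)]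
  refine le_of_mul_le_mul_left ?_ hn_pos
  linarith

end Exploration

/-- convergence of the game value for discrete Frank–Wolfe self-play in
Gaussian BAI. Any sequence of iterates following the one-hot Frank–Wolfe updates with
step sizes `1/(n+1)` and selections from `LMO_p` and `LMO_μ` satisfies
`F(p_n, μ_n) → F* = max_{p∈Δ_K} min_{x∈X} D(p,x)`. -/
theorem stmt_14 {K : ℕ} (hK : 1 < K) (θ : Fin K → ℝ) (Istar : Fin K)
    (hmax : ∀ j ≠ Istar, θ j < θ Istar) (σ : ℝ) (hσ : 0 < σ)
    (p : ℕ → (Fin K → ℝ)) (μ : ℕ → ({x : Fin K // x ≠ Istar} → ℝ))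
    (q : ℕ → (Fin K → ℝ)) (ν : ℕ → ({x : Fin K // x ≠ Istar} → ℝ))
    (hp0 : p 0 ∈ stdSimplex ℝ (Fin K))
    (hμ0 : μ 0 ∈ stdSimplex ℝ {x : Fin K // x ≠ Istar})
    (hq : ∀ n, q n ∈ LMOpg θ σ Istar (p n) (μ n))
    (hν : ∀ n, ν n ∈ LMOmug θ σ Istar (p n))
    (hup : ∀ n, p (n + 1) = p n + (1 / ((n : ℝ) + 1)) • (q n - p n))
    (hum : ∀ n, μ (n + 1) = μ n + (1 / ((n : ℝ) + 1)) • (ν n - μ n)) :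
    Tendsto (fun n => Fg θ σ Istar (p n) (μ n)) atTop
      (nhds (⨆ pp : stdSimplex ℝ (Fin K),
        ⨅ x : {x : Fin K // x ≠ Istar}, Dg θ σ Istar pp.1 x.1)) := by
  have hp_avg : IsRunningAverage p q := hup
  have hμ_avg : IsRunningAverage μ ν := hum
  have hq_mem n := mem_stdSimplex_of_mem_LMOpg (hq n)
  have hν_mem n := (hν n).1
  have hp n := hp_avg.mem (convex_stdSimplex ℝ _) hp0 hq_mem n
  have hμ n := hμ_avg.mem (convex_stdSimplex ℝ _) hμ0 hν_mem n
  obtain ⟨c, hc, hexplore⟩ := hp_avg.exists_pos_eventually_le_apply hp hq_mem fun n _ =>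
    apply_eq_zero_of_mem_LMOpg_of_lt (fun x hx => gapWeight_pos hσ.ne' (hmax x hx).ne) (hp n).1
      (hμ n) (hq n)
  have hT : IsCompact (stdSimplex ℝ (Fin K) ∩ {a | c ≤ a Istar}) :=
    (isCompact_stdSimplex ℝ _).inter_right (isClosed_le continuous_const (continuous_apply Istar))
  have hTΩ : stdSimplex ℝ (Fin K) ∩ {a | c ≤ a Istar} ⊆ regularCone Istar :=
    fun a ha => mem_regularCone_of_nonneg ha.1.1 (hc.trans_le ha.2)
  have hpT := hexplore.mono fun n hn => And.intro (hp n) hn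
  exact isSuperlinearOn_gaussianPayoff.tendsto_dotProduct_of_best_response hp_avg hμ_avg hp hq_mem
    hμ hν_mem hT hTΩ hpT
    (hpT.mono fun n hn _ hi => score_le_score_of_mem_LMOpg (hTΩ hn) (hq n) hi)
    (Eventually.of_forall fun n _ hx => gaussianPayoff_le_of_mem_LMOmug (hν n) hx)

end
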